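/- arXiv:1208.5226 — 7 statements merged into one kernel-verified Lean document; each statement's English description precedes it below -/
import Mathlib

section
/- (Lemma 2.1, Li–Yau) Let F be a real-valued measurable function on ℝⁿ with 0 ≤ F(ξ) ≤ M₁ for all ξ, and assume ∫_{ℝⁿ} |ξ|² F(ξ) dξ ≤ M₂. Then ∫_{ℝⁿ} F(ξ) dξ ≤ ((n+2)/n)^{n/(n+2)} · M₂^{n/(n+2)} · (M₁ B_n)^{2/(n+2)}. -/
open MeasureTheory Real

lemma radial_aux (n : ℕ) (hn : 1 ≤ n) (R : ℝ) (hR : 0 < R) :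
    ∫ y in Set.Ioi (0:ℝ), y ^ (n - 1) * max (R ^ 2 - y ^ 2) 0
      = R ^ (n + 2) * (2 / (n * (n + 2))) := by
  have h1 : ∫ y in Set.Ioi (0:ℝ), y ^ (n - 1) * max (R ^ 2 - y ^ 2) 0
      = ∫ y in Set.Ioc (0:ℝ) R, y ^ (n - 1) * max (R ^ 2 - y ^ 2) 0 := by
    apply setIntegral_eq_of_subset_of_forall_sdiff_eq_zero measurableSet_Ioi
    · exact fun x hx => hx.1
    · intro x hx
      have h0 : 0 < x := hx.1
      have hx2 : R < x := by
        by_contra h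
        exact hx.2 ⟨h0, not_lt.mp h⟩
      rw [max_eq_right (by nlinarith), mul_zero]
  obtain ⟨m, rfl⟩ : ∃ m, n = m + 1 := ⟨n - 1, by omega⟩
  have h2 : ∫ y in Set.Ioc (0:ℝ) R, y ^ (m + 1 - 1) * max (R ^ 2 - y ^ 2) 0
      = ∫ y in Set.Ioc (0:ℝ) R, (R ^ 2 * y ^ m - y ^ (m + 2)) := by
    apply setIntegral_congr_fun measurableSet_Ioc
    intro x hx
    have h0 : 0 < x := hx.1
    have h3 : x ≤ R := hx.2
    simp only [Nat.add_sub_cancel]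
    rw [max_eq_left (by nlinarith)]
    ring
  rw [h1, h2, ← intervalIntegral.integral_of_le hR.le, intervalIntegral.integral_sub
    (Continuous.intervalIntegrable (by fun_prop) _ _)
    (Continuous.intervalIntegrable (by fun_prop) _ _),
    intervalIntegral.integral_const_mul, integral_pow, integral_pow]
  push_cast
  have : (m:ℝ) + 1 ≠ 0 := by positivity
  have : (m:ℝ) + 2 + 1 ≠ 0 := by positivity
  have : (m:ℝ) + 1 + 2 ≠ 0 := by positivity
  field_simp
  simp only [ne_eq, Nat.add_eq_zero_iff, one_ne_zero, and_false, not_false_eq_true, zero_pow,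
    OfNat.ofNat_ne_zero]
  ring

lemma ball_aux (n : ℕ) (hn : 1 ≤ n) (R : ℝ) (hR : 0 < R) :
    ∫⁻ ξ : EuclideanSpace ℝ (Fin n), ENNReal.ofReal (max (R ^ 2 - ‖ξ‖ ^ 2) 0)
      = ENNReal.ofReal ((volume (Metric.ball (0 : EuclideanSpace ℝ (Fin n)) 1)).toReal *
        (R ^ (n + 2) * (2 / (n + 2)))) := by
  haveI : Nonempty (Fin n) := ⟨⟨0, by omega⟩⟩
  have hc : Continuous (fun ξ : EuclideanSpace ℝ (Fin n) => max (R ^ 2 - ‖ξ‖ ^ 2) 0) := by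
    fun_prop
  have hs : HasCompactSupport (fun ξ : EuclideanSpace ℝ (Fin n) => max (R ^ 2 - ‖ξ‖ ^ 2) 0) := by
    apply HasCompactSupport.intro (isCompact_closedBall (0 : EuclideanSpace ℝ (Fin n)) R)
    intro x hx
    have : R < ‖x‖ := by simpa using hx
    exact max_eq_right (by nlinarith)
  rw [← ofReal_integral_eq_lintegral_ofReal (hc.integrable_of_hasCompactSupport hs)
    (Filter.Eventually.of_forall fun x => le_max_right _ _)]
  congr 1
  rw [integral_fun_norm_addHaar volume (fun y : ℝ => max (R ^ 2 - y ^ 2) 0)]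
  simp only [smul_eq_mul, nsmul_eq_mul, finrank_euclideanSpace, Fintype.card_fin]
  rw [radial_aux n hn R hR]
  have : (n:ℝ) ≠ 0 := by positivity
  simp only [Measure.real]
  field_simp

lemma key_aux (n : ℕ) (hn : 1 ≤ n) (F : EuclideanSpace ℝ (Fin n) → ℝ)
    (hFmeas : Measurable F) (M₁ M₂ : ℝ) (hM₁ : 0 ≤ M₁) (hM₂ : 0 ≤ M₂)
    (hF0 : ∀ ξ, 0 ≤ F ξ) (hFle : ∀ ξ, F ξ ≤ M₁)
    (hmom : ∫⁻ ξ, ENNReal.ofReal (‖ξ‖ ^ 2 * F ξ) ≤ ENNReal.ofReal M₂) (R : ℝ) (hR : 0 < R) :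
    ENNReal.ofReal (R ^ 2) * ∫⁻ ξ, ENNReal.ofReal (F ξ) ≤ ENNReal.ofReal (M₂ +
      M₁ * ((volume (Metric.ball (0 : EuclideanSpace ℝ (Fin n)) 1)).toReal *
        (R ^ (n + 2) * (2 / (n + 2))))) := by
  rw [← lintegral_const_mul _ (by fun_prop), ENNReal.ofReal_add hM₂ (by positivity),
    ENNReal.ofReal_mul hM₁, ← ball_aux n hn R hR, ← lintegral_const_mul _ (by fun_prop)]
  refine le_trans ?_ (add_le_add_left hmom _)
  rw [← lintegral_add_left (by fun_prop)]
  apply lintegral_mono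
  intro ξ
  simp only
  rw [← ENNReal.ofReal_mul hM₁, ← ENNReal.ofReal_mul (by positivity),
    ← ENNReal.ofReal_add (mul_nonneg (by positivity) (hF0 ξ)) (by positivity)]
  apply ENNReal.ofReal_le_ofReal
  have h1 := hF0 ξ
  have h2 := hFle ξ
  have h3 := le_max_left (R ^ 2 - ‖ξ‖ ^ 2) 0
  have h4 := le_max_right (R ^ 2 - ‖ξ‖ ^ 2) 0
  nlinarith [mul_le_mul_of_nonneg_left h3 h1, mul_le_mul_of_nonneg_right h2 h4]

/-- Lemma 2.1, Li–Yau: if `F : ℝⁿ → ℝ` is measurable with `0 ≤ F ≤ M₁` and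
`∫ |ξ|² F(ξ) dξ ≤ M₂`, then
`∫ F ≤ ((n+2)/n)^{n/(n+2)} M₂^{n/(n+2)} (M₁ B_n)^{2/(n+2)}`,
where `B_n` is the volume of the unit ball in `ℝⁿ`. -/
theorem stmt2 (n : ℕ) (hn : 1 ≤ n) (F : EuclideanSpace ℝ (Fin n) → ℝ)
    (hFmeas : Measurable F) (M₁ M₂ : ℝ) (hM₁ : 0 ≤ M₁) (hM₂ : 0 ≤ M₂)
    (hF0 : ∀ ξ, 0 ≤ F ξ) (hFle : ∀ ξ, F ξ ≤ M₁)
    (hmom : ∫⁻ ξ, ENNReal.ofReal (‖ξ‖ ^ 2 * F ξ) ≤ ENNReal.ofReal M₂) :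
    ∫⁻ ξ, ENNReal.ofReal (F ξ) ≤
      ENNReal.ofReal
        ((((n : ℝ) + 2) / n) ^ ((n : ℝ) / (n + 2)) * M₂ ^ ((n : ℝ) / (n + 2)) *
          (M₁ * (volume (Metric.ball (0 : EuclideanSpace ℝ (Fin n)) 1)).toReal) ^
            ((2 : ℝ) / (n + 2))) := by
  have hn0 : (0:ℝ) < n := by exact_mod_cast hn
  haveI : Nonempty (Fin n) := ⟨⟨0, by omega⟩⟩
  rcases hM₁.eq_or_lt with h | hM₁'
  · have : ∀ ξ, F ξ = 0 := fun ξ => le_antisymm (h ▸ hFle ξ) (hF0 ξ)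
    simp [this]
  rcases hM₂.eq_or_lt with h | hM₂'
  · have h0 : ∫⁻ ξ, ENNReal.ofReal (F ξ) = 0 := by
      rw [← h, ENNReal.ofReal_zero, nonpos_iff_eq_zero, lintegral_eq_zero_iff (by fun_prop)] at hmom
      rw [lintegral_eq_zero_iff (by fun_prop)]
      filter_upwards [hmom, Measure.ae_ne volume (0 : EuclideanSpace ℝ (Fin n))] with ξ h1 h2
      have h3 : ‖ξ‖ ^ 2 * F ξ ≤ 0 := ENNReal.ofReal_eq_zero.mp h1
      have h4 : 0 < ‖ξ‖ ^ 2 := by positivity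
      have : F ξ ≤ 0 := by
        by_contra hc
        push Not at hc
        nlinarith [mul_pos h4 hc]
      simpa using this
    rw [h0]; exact bot_le
  have hB : 0 < (volume (Metric.ball (0 : EuclideanSpace ℝ (Fin n)) 1)).toReal :=
    ENNReal.toReal_pos (Metric.measure_ball_pos _ _ one_pos).ne' measure_ball_lt_top.ne
  have key := key_aux n hn F hFmeas M₁ M₂ hM₁ hM₂ hF0 hFle hmom
  generalize (volume (Metric.ball (0 : EuclideanSpace ℝ (Fin n)) 1)).toReal = B at *
  set T : ℝ := (n + 2) / n * M₂ / (M₁ * B) with hT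
  have hTpos : 0 < T := by positivity
  set R : ℝ := T ^ (1 / ((n:ℝ) + 2)) with hR
  have hRpos : 0 < R := by positivity
  have hRn : R ^ (n + 2) = T := by
    rw [hR, ← rpow_natCast, ← rpow_mul hTpos.le]
    push_cast
    rw [one_div_mul_cancel (by positivity), rpow_one]
  have hR2 : R ^ 2 = T ^ (2 / ((n:ℝ) + 2)) := by
    rw [hR, ← rpow_natCast, ← rpow_mul hTpos.le]
    congr 1
    push_cast
    ring
  have k := key R hRpos
  have e : M₂ + M₁ * (B * (R ^ (n + 2) * (2 / (n + 2)))) = R ^ 2 *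
      ((((n : ℝ) + 2) / n) ^ ((n : ℝ) / (n + 2)) * M₂ ^ ((n : ℝ) / (n + 2)) *
          (M₁ * B) ^ ((2 : ℝ) / (n + 2))) := by
    rw [hRn, hR2, ← mul_rpow (by positivity) (by positivity)]
    have h1 : T ^ (2 / ((n:ℝ) + 2)) * (M₁ * B) ^ ((2 : ℝ) / (n + 2))
        = (((n : ℝ) + 2) / n * M₂) ^ ((2 : ℝ) / (n + 2)) := by
      rw [← mul_rpow (by positivity) (by positivity), hT, div_mul_cancel₀ _ (by positivity)]
    have h2 : (((n : ℝ) + 2) / n * M₂) ^ ((2 : ℝ) / (n + 2)) *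
        (((n : ℝ) + 2) / n * M₂) ^ ((n : ℝ) / (n + 2)) = ((n : ℝ) + 2) / n * M₂ := by
      rw [← rpow_add (by positivity), ← add_div, add_comm (2:ℝ), div_self (by positivity), rpow_one]
    have h3 : M₂ + M₁ * (B * (T * (2 / (n + 2)))) = ((n : ℝ) + 2) / n * M₂ := by
      rw [hT]; field_simp
    rw [h3, mul_left_comm, h1]
    exact h2.symm.trans (mul_comm _ _)
  rw [e, ENNReal.ofReal_mul (by positivity)] at k
  exact (ENNReal.mul_le_mul_iff_right (by simpa using hRpos.ne') ENNReal.ofReal_ne_top).mp k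
end

section
/- (Lemma 2.3) Let λ > 0, let p be a positive integer, and let f ∈ C^p([0, 1/(2√λ)]) be a real-valued function such that f^{(p)} is not identically zero. Then at least one of the following two inequalities holds: max |f′| ≤ 2^{p−1} (max |f^{(p)}|)^{1/p} (max |f|)^{1−1/p}, or max |f′| < 4^{p+1} λ^{1/2} max |f|, where all maxima are taken over [0, 1/(2√λ)]. -/
open Real

/-- sup of |g| on [0,L] -/
noncomputable def supN (L : ℝ) (g : ℝ → ℝ) : ℝ :=
  sSup ((fun x => |g x|) '' Set.Icc (0 : ℝ) L)

lemma supN_nonneg (L : ℝ) (g : ℝ → ℝ) : 0 ≤ supN L g := by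
  apply Real.sSup_nonneg
  rintro _ ⟨x, _, rfl⟩
  exact abs_nonneg _

lemma le_supN {L : ℝ} {g : ℝ → ℝ} (hg : ContinuousOn g (Set.Icc 0 L)) {x : ℝ}
    (hx : x ∈ Set.Icc 0 L) : |g x| ≤ supN L g := by
  apply le_csSup
  · exact (isCompact_Icc.image_of_continuousOn hg.abs).bddAbove
  · exact ⟨x, hx, rfl⟩

lemma supN_le {L : ℝ} (hL : 0 < L) {g : ℝ → ℝ} {C : ℝ}
    (h : ∀ x ∈ Set.Icc 0 L, |g x| ≤ C) : supN L g ≤ C := by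
  apply csSup_le
  · exact ⟨_, 0, ⟨le_rfl, hL.le⟩, rfl⟩
  · rintro _ ⟨x, hx, rfl⟩
    exact h x hx

lemma taylor_aux {L M2 : ℝ} (hL : 0 < L) (f : ℝ → ℝ)
    (hf : DifferentiableOn ℝ f (Set.Icc 0 L))
    (hf' : DifferentiableOn ℝ (derivWithin f (Set.Icc 0 L)) (Set.Icc 0 L))
    (hM : ∀ x ∈ Set.Icc 0 L,
      |derivWithin (derivWithin f (Set.Icc 0 L)) (Set.Icc 0 L) x| ≤ M2)
    (x : ℝ) (hx : x ∈ Set.Icc 0 L) (σ : ℝ) (hσ : |σ| = 1) (h : ℝ) (hh : 0 < h)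
    (hxh : x + σ * h ∈ Set.Icc 0 L) :
    |f (x + σ * h) - f x - σ * h * derivWithin f (Set.Icc 0 L) x| ≤ M2 * h ^ 2 / 2 := by
  set s := Set.Icc (0:ℝ) L with hs
  set d := derivWithin f s with hd
  have hmaps : Set.MapsTo (fun t => x + σ * t) (Set.Icc 0 h) s := by
    intro t ht
    have hc : Convex ℝ s := convex_Icc 0 L
    have h1 := hc hx hxh (a := 1 - t / h) (b := t / h)
      (by rw [sub_nonneg, div_le_one hh]; exact ht.2) (div_nonneg ht.1 hh.le) (by ring)
    have : (1 - t / h) • x + (t / h) • (x + σ * h) = x + σ * t := by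
      simp only [smul_eq_mul]; field_simp; ring
    rwa [this] at h1
  have hder : ∀ t ∈ Set.Icc 0 h, HasDerivWithinAt
      (fun t => f (x + σ * t) - f x - σ * t * d x) (σ * (d (x + σ * t) - d x))
      (Set.Icc 0 h) t := by
    intro t ht
    have h1 : HasDerivWithinAt f (d (x + σ * t)) s (x + σ * t) :=
      (hf _ (hmaps ht)).hasDerivWithinAt
    have h2 : HasDerivWithinAt (fun t : ℝ => x + σ * t) σ (Set.Icc 0 h) t := by
      simpa using (((hasDerivAt_id t).const_mul σ).const_add x).hasDerivWithinAt
    have h3 := h1.comp t h2 hmaps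
    have h4 : HasDerivWithinAt (fun t : ℝ => σ * t * d x) (σ * d x) (Set.Icc 0 h) t := by
      simpa using (((hasDerivAt_id t).const_mul σ).mul_const (d x)).hasDerivWithinAt
    have h5 := (h3.sub_const (f x)).sub h4
    exact h5.congr_deriv (by ring)
  have key := image_norm_le_of_norm_deriv_right_le_deriv_boundary
    (f := fun t => f (x + σ * t) - f x - σ * t * d x)
    (f' := fun t => σ * (d (x + σ * t) - d x)) (a := 0) (b := h)
    (B := fun t => M2 * t ^ 2 / 2) (B' := fun t => M2 * t)
    (fun t ht => (hder t ht).continuousWithinAt)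
    (fun t ht => ((hder t ⟨ht.1, ht.2.le⟩).mono_of_mem_nhdsWithin (Icc_mem_nhdsGE_of_mem ht)))
    (by simp)
    (fun t => by
      have := (((hasDerivAt_id t).pow 2).const_mul M2).div_const 2
      exact this.congr_deriv (by simp; ring))
    (fun t ht => by
      have hc : Convex ℝ s := convex_Icc 0 L
      have := hc.norm_image_sub_le_of_norm_derivWithin_le (f := d) (C := M2) hf'
        (fun y hy => hM y hy) hx (hmaps ⟨ht.1, ht.2.le⟩)
      simp only [Real.norm_eq_abs, abs_mul, hσ, one_mul] at this ⊢
      rw [add_sub_cancel_left, abs_mul, hσ, one_mul, abs_of_nonneg ht.1] at this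
      exact this)
  have := key (x := h) ⟨hh.le, le_rfl⟩
  simpa using this

lemma landau {L M0 M2 : ℝ} (hL : 0 < L) (f : ℝ → ℝ)
    (hf : DifferentiableOn ℝ f (Set.Icc 0 L))
    (hf' : DifferentiableOn ℝ (derivWithin f (Set.Icc 0 L)) (Set.Icc 0 L))
    (hM0 : ∀ x ∈ Set.Icc 0 L, |f x| ≤ M0)
    (hM : ∀ x ∈ Set.Icc 0 L,
      |derivWithin (derivWithin f (Set.Icc 0 L)) (Set.Icc 0 L) x| ≤ M2)
    (x : ℝ) (hx : x ∈ Set.Icc 0 L) (h : ℝ) (hh : 0 < h) (hhL : h ≤ L / 2) :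
    |derivWithin f (Set.Icc 0 L) x| ≤ 2 * M0 / h + h * M2 / 2 := by
  obtain ⟨σ, hσ, hy⟩ : ∃ σ : ℝ, |σ| = 1 ∧ x + σ * h ∈ Set.Icc 0 L := by
    rcases le_total x (L / 2) with h1 | h1
    · exact ⟨1, by simp, by constructor <;> linarith [hx.1]⟩
    · exact ⟨-1, by simp, by constructor <;> linarith [hx.2]⟩
  have h1 := taylor_aux hL f hf hf' hM x hx σ hσ h hh hy
  have h2 := hM0 _ hy
  have h3 := hM0 _ hx
  have h4 : |σ * h * derivWithin f (Set.Icc 0 L) x| = h * |derivWithin f (Set.Icc 0 L) x| := by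
    rw [abs_mul, abs_mul, hσ, abs_of_pos hh, one_mul]
  have h5 : h * |derivWithin f (Set.Icc 0 L) x| ≤ 2 * M0 + M2 * h ^ 2 / 2 := by
    rw [← h4]
    rw [abs_le] at *
    constructor <;> linarith [h1.1, h1.2, h2.1, h2.2, h3.1, h3.2]
  have h6 : 2 * M0 / h + h * M2 / 2 = (2 * M0 + M2 * h ^ 2 / 2) / h := by
    field_simp
  rw [h6, le_div_iff₀ hh]
  linarith

lemma numB {L M0 M1 M2 : ℝ} (hL : 0 < L) (h0 : 0 < M0) (h1 : 0 ≤ M1) (h2 : 0 ≤ M2)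
    (H : ∀ h, 0 < h → h ≤ L / 2 → M1 ≤ 2 * M0 / h + h * M2 / 2) :
    M1 ^ 2 ≤ 4 * M0 * M2 ∨ M1 < 8 * M0 / L := by
  rcases le_or_gt (16 * M0) (M2 * L ^ 2) with hc | hc
  · left
    have h2' : 0 < M2 := by
      rcases h2.eq_or_lt with h | h
      · rw [← h] at hc; linarith
      · exact h
    set r := √(M0 / M2) with hr
    have hr0 : 0 < r := Real.sqrt_pos.2 (div_pos h0 h2')
    have hr2 : r ^ 2 * M2 = M0 := by
      rw [hr, Real.sq_sqrt (div_pos h0 h2').le]; field_simp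
    have hle : 2 * r ≤ L / 2 := by
      have : (4 * r) ^ 2 ≤ L ^ 2 := by
        have : (4 * r) ^ 2 * M2 ≤ L ^ 2 * M2 := by nlinarith
        exact le_of_mul_le_mul_right this h2'
      have := (abs_le.1 (abs_le_of_sq_le_sq this hL.le)).2
      linarith
    have := H (2 * r) (by linarith) hle
    have e : 2 * M0 / (2 * r) + 2 * r * M2 / 2 = 2 * r * M2 := by
      rw [← hr2]; field_simp; ring
    rw [e] at this
    calc M1 ^ 2 ≤ (2 * r * M2) ^ 2 := by gcongr
      _ = 4 * (r ^ 2 * M2) * M2 := by ring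
      _ = _ := by rw [hr2]
  · right
    have := H (L / 2) (by linarith) le_rfl
    refine this.trans_lt ?_
    have e : 8 * M0 / L - (2 * M0 / (L / 2) + L / 2 * M2 / 2) = (16 * M0 - M2 * L ^ 2) / (4 * L) := by
      field_simp; ring
    have : 0 < (16 * M0 - M2 * L ^ 2) / (4 * L) := div_pos (by linarith) (by linarith)
    linarith

lemma numC {M0 M1 M2 P : ℝ} (p : ℕ) (h0 : 0 < M0) (h1 : 0 ≤ M1) (hP : 0 ≤ P)
    (hA : M1 ^ 2 ≤ 4 * M0 * M2)
    (hB : M2 ≤ 2 ^ p * P ^ ((1 : ℝ) / ((p + 1 : ℕ) : ℝ)) *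
      M1 ^ (1 - (1 : ℝ) / ((p + 1 : ℕ) : ℝ))) :
    M1 ≤ 2 ^ (p + 1) * P ^ ((1 : ℝ) / ((p + 2 : ℕ) : ℝ)) *
      M0 ^ (1 - (1 : ℝ) / ((p + 2 : ℕ) : ℝ)) := by
  rcases h1.eq_or_lt with h1 | h1
  · rw [← h1]; positivity
  set a := P ^ ((1 : ℝ) / (((p : ℝ) + 1) * (p + 2))) with ha
  set b := M0 ^ ((1 : ℝ) / ((p : ℝ) + 2)) with hb
  set m := M1 ^ ((1 : ℝ) / ((p : ℝ) + 1)) with hm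
  have ha0 : 0 ≤ a := by positivity
  have hb0 : 0 < b := by positivity
  have hm0 : 0 < m := by positivity
  have hM1 : M1 = m ^ (p + 1) := by
    rw [hm, ← Real.rpow_natCast, ← Real.rpow_mul h1.le]
    push_cast
    rw [one_div_mul_cancel (by positivity), Real.rpow_one]
  have hM0 : M0 = b ^ (p + 2) := by
    rw [hb, ← Real.rpow_natCast, ← Real.rpow_mul h0.le]
    push_cast
    rw [one_div_mul_cancel (by positivity), Real.rpow_one]
  have e1 : P ^ ((1 : ℝ) / ((p + 1 : ℕ) : ℝ)) = a ^ (p + 2) := by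
    rw [ha, ← Real.rpow_natCast, ← Real.rpow_mul hP]
    push_cast
    congr 1; field_simp
  have e2 : P ^ ((1 : ℝ) / ((p + 2 : ℕ) : ℝ)) = a ^ (p + 1) := by
    rw [ha, ← Real.rpow_natCast, ← Real.rpow_mul hP]
    push_cast
    congr 1; field_simp
  have e3 : M1 ^ (1 - (1 : ℝ) / ((p + 1 : ℕ) : ℝ)) = m ^ p := by
    rw [hm, ← Real.rpow_natCast, ← Real.rpow_mul h1.le]
    push_cast
    congr 1; field_simp; ring
  have e4 : M0 ^ (1 - (1 : ℝ) / ((p + 2 : ℕ) : ℝ)) = b ^ (p + 1) := by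
    rw [hb, ← Real.rpow_natCast, ← Real.rpow_mul h0.le]
    push_cast
    congr 1; field_simp; ring
  rw [e1, e3] at hB
  rw [e2, e4, hM1]
  have hfin : m ^ (p + 2) * m ^ p ≤ (2 * a * b) ^ (p + 2) * m ^ p := by
    calc m ^ (p + 2) * m ^ p = M1 ^ 2 := by rw [hM1]; ring
      _ ≤ 4 * M0 * M2 := hA
      _ ≤ 4 * M0 * (2 ^ p * a ^ (p + 2) * m ^ p) := by gcongr
      _ = 4 * b ^ (p + 2) * (2 ^ p * a ^ (p + 2) * m ^ p) := by rw [hM0]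
      _ = (2 * a * b) ^ (p + 2) * m ^ p := by rw [mul_pow, mul_pow]; ring
  have h3 := le_of_mul_le_mul_right hfin (by positivity)
  have h4 : m ≤ 2 * a * b :=
    le_of_pow_le_pow_left₀ (by omega) (by positivity) h3
  calc m ^ (p + 1) ≤ (2 * a * b) ^ (p + 1) := by gcongr
    _ = _ := by rw [mul_pow, mul_pow]

lemma iter_zero {L : ℝ} (n : ℕ) (f : ℝ → ℝ) (hf : ∀ x ∈ Set.Icc 0 L, f x = 0) :
    ∀ x ∈ Set.Icc 0 L, iteratedDerivWithin n f (Set.Icc 0 L) x = 0 := by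
  intro x hx
  have : Set.EqOn f (fun _ => (0:ℝ)) (Set.Icc 0 L) := hf
  rw [iteratedDerivWithin_congr this hx]
  simp

lemma main_aux {L : ℝ} (hL : 0 < L) (p : ℕ) : ∀ f : ℝ → ℝ,
    ContDiffOn ℝ ((p + 1 : ℕ) : ℕ∞) f (Set.Icc 0 L) →
    (∃ x ∈ Set.Icc 0 L, iteratedDerivWithin (p + 1) f (Set.Icc 0 L) x ≠ 0) →
    supN L (derivWithin f (Set.Icc 0 L)) ≤ 2 ^ p *
      supN L (iteratedDerivWithin (p + 1) f (Set.Icc 0 L)) ^ ((1 : ℝ) / ((p + 1 : ℕ) : ℝ)) *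
      supN L f ^ (1 - (1 : ℝ) / ((p + 1 : ℕ) : ℝ)) ∨
    supN L (derivWithin f (Set.Icc 0 L)) < 4 ^ (p + 2) * (1 / (2 * L)) * supN L f := by
  induction p with
  | zero =>
    intro f hf hfp
    left
    have : iteratedDerivWithin (0 + 1) f (Set.Icc 0 L) = derivWithin f (Set.Icc 0 L) := by
      funext x; simp [iteratedDerivWithin_one]
    rw [this]
    simp
  | succ p ih =>
    intro f hf hfp
    have hu : UniqueDiffOn ℝ (Set.Icc 0 L) := uniqueDiffOn_Icc hL
    have hd : ContDiffOn ℝ ((p + 1 : ℕ) : ℕ∞) (derivWithin f (Set.Icc 0 L)) (Set.Icc 0 L) :=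
      hf.derivWithin hu (by norm_cast)
    have hit : iteratedDerivWithin (p + 1 + 1) f (Set.Icc 0 L) =
        iteratedDerivWithin (p + 1) (derivWithin f (Set.Icc 0 L)) (Set.Icc 0 L) := by
      funext x; rw [iteratedDerivWithin_succ']
    have hfc := hf.continuousOn
    have hdc := hd.continuousOn
    have hddc : ContinuousOn (derivWithin (derivWithin f (Set.Icc 0 L)) (Set.Icc 0 L))
        (Set.Icc 0 L) :=
      hd.continuousOn_derivWithin hu (by norm_cast; omega)
    have h0 : 0 < supN L f := by
      by_contra hcon
      obtain ⟨x, hx, hne⟩ := hfp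
      refine hne (iter_zero _ f (fun y hy => ?_) x hx)
      have := le_supN hfc hy
      exact abs_nonpos_iff.1 (by linarith)
    have hfd : DifferentiableOn ℝ f (Set.Icc 0 L) := hf.differentiableOn (by norm_cast)
    have hdd : DifferentiableOn ℝ (derivWithin f (Set.Icc 0 L)) (Set.Icc 0 L) :=
      hd.differentiableOn (by norm_cast)
    have hB := numB hL h0 (supN_nonneg L (derivWithin f (Set.Icc 0 L)))
      (supN_nonneg L (derivWithin (derivWithin f (Set.Icc 0 L)) (Set.Icc 0 L)))
      (fun h hh hhL => supN_le hL (fun x hx =>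
        landau hL f hfd hdd (fun y hy => le_supN hfc hy) (fun y hy => le_supN hddc hy)
          x hx h hh hhL))
    have hI := ih (derivWithin f (Set.Icc 0 L)) hd (by rw [← hit]; exact hfp)
    rw [← hit] at hI
    have h1 := supN_nonneg L (derivWithin f (Set.Icc 0 L))
    have hP := supN_nonneg L (iteratedDerivWithin (p + 1 + 1) f (Set.Icc 0 L))
    generalize supN L (derivWithin (derivWithin f (Set.Icc 0 L)) (Set.Icc 0 L)) = M2 at *
    generalize supN L (derivWithin f (Set.Icc 0 L)) = M1 at *
    generalize supN L f = M0 at *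
    generalize supN L (iteratedDerivWithin (p + 1 + 1) f (Set.Icc 0 L)) = P at *
    rcases hB with hB | hB
    · rcases hI with hI | hI
      · left
        exact numC p h0 h1 hP hB hI
      · right
        rcases h1.eq_or_lt with h1 | h1
        · rw [← h1]; positivity
        have : M1 * M1 < (4 ^ (p + 1 + 2) * (1 / (2 * L)) * M0) * M1 := by
          calc M1 * M1 = M1 ^ 2 := by ring
            _ ≤ 4 * M0 * M2 := hB
            _ < 4 * M0 * (4 ^ (p + 2) * (1 / (2 * L)) * M1) := by gcongr
            _ = _ := by ring
        exact lt_of_mul_lt_mul_right this h1.le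
    · right
      refine hB.trans_le ?_
      have h16 : (16 : ℝ) ≤ 4 ^ (p + 1 + 2) := by
        calc (16 : ℝ) = 4 ^ 2 := by norm_num
          _ ≤ _ := pow_le_pow_right₀ (by norm_num) (by omega)
      calc 8 * M0 / L = 16 * (1 / (2 * L)) * M0 := by field_simp; ring
        _ ≤ _ := by gcongr

/-- Lemma 2.3: if `f ∈ Cᵖ([0, 1/(2√λ)])` and `f⁽ᵖ⁾` is not identically
zero, then `max |f′| ≤ 2^{p−1} (max |f⁽ᵖ⁾|)^{1/p} (max |f|)^{1−1/p}` or
`max |f′| < 4^{p+1} λ^{1/2} max |f|`, the maxima being over `[0, 1/(2√λ)]`. -/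
theorem stmt4 (lam : ℝ) (hlam : 0 < lam) (p : ℕ) (hp : 1 ≤ p) (f : ℝ → ℝ)
    (hf : ContDiffOn ℝ (p : ℕ∞) f (Set.Icc 0 (1 / (2 * Real.sqrt lam))))
    (hfp : ∃ x ∈ Set.Icc (0 : ℝ) (1 / (2 * Real.sqrt lam)),
      iteratedDerivWithin p f (Set.Icc 0 (1 / (2 * Real.sqrt lam))) x ≠ 0) :
    sSup ((fun x => |derivWithin f (Set.Icc 0 (1 / (2 * Real.sqrt lam))) x|) ''
        Set.Icc (0 : ℝ) (1 / (2 * Real.sqrt lam))) ≤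
      2 ^ (p - 1) *
        (sSup ((fun x => |iteratedDerivWithin p f (Set.Icc 0 (1 / (2 * Real.sqrt lam))) x|) ''
          Set.Icc (0 : ℝ) (1 / (2 * Real.sqrt lam)))) ^ ((1 : ℝ) / p) *
        (sSup ((fun x => |f x|) '' Set.Icc (0 : ℝ) (1 / (2 * Real.sqrt lam)))) ^
          (1 - (1 : ℝ) / p) ∨
    sSup ((fun x => |derivWithin f (Set.Icc 0 (1 / (2 * Real.sqrt lam))) x|) ''
        Set.Icc (0 : ℝ) (1 / (2 * Real.sqrt lam))) <
      4 ^ (p + 1) * Real.sqrt lam *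
        sSup ((fun x => |f x|) '' Set.Icc (0 : ℝ) (1 / (2 * Real.sqrt lam))) := by
  obtain ⟨q, rfl⟩ : ∃ q, p = q + 1 := ⟨p - 1, by omega⟩
  have hs : 0 < Real.sqrt lam := Real.sqrt_pos.2 hlam
  have hL : 0 < 1 / (2 * Real.sqrt lam) := by positivity
  have e : 1 / (2 * (1 / (2 * Real.sqrt lam))) = Real.sqrt lam := by field_simp
  have key := main_aux hL q f hf hfp
  rw [e] at key
  exact key
end

section
/- Let L > 0 and let f ∈ C²([0, L]) be real-valued. Set M₀ = max |f|, M₁ = max |f′|, M₂ = max |f″| on [0, L], and assume M₀, M₁, M₂ > 0. Then at least one of the following holds: M₁² ≤ 4 M₀ M₂, or M₁ < 8 M₀ / L. -/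
lemma aux_mono (h : ℝ) (G G' : ℝ → ℝ)
    (hG : ∀ t ∈ Set.Icc 0 h, HasDerivWithinAt G (G' t) (Set.Icc 0 h) t)
    (hp : ∀ t ∈ Set.Icc 0 h, 0 ≤ G' t) (t : ℝ) (ht : t ∈ Set.Icc 0 h) : G 0 ≤ G t := by
  have hm : MonotoneOn G (Set.Icc 0 h) := by
    refine monotoneOn_of_hasDerivWithinAt_nonneg (f' := G') (convex_Icc 0 h)
      (fun t ht => (hG t ht).continuousWithinAt) ?_ ?_
    · intro t ht
      exact (hG t (interior_subset ht)).mono interior_subset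
    · intro t ht
      exact hp t (interior_subset ht)
  exact hm ⟨le_rfl, ht.1.trans ht.2⟩ ht ht.1

lemma aux_taylor (h M : ℝ) (hh : 0 ≤ h) (F F' F'' : ℝ → ℝ)
    (h1 : ∀ t ∈ Set.Icc 0 h, HasDerivWithinAt F (F' t) (Set.Icc 0 h) t)
    (h2 : ∀ t ∈ Set.Icc 0 h, HasDerivWithinAt F' (F'' t) (Set.Icc 0 h) t)
    (hp : ∀ t ∈ Set.Icc 0 h, -M ≤ F'' t) :
    F' 0 * h - M * h ^ 2 / 2 ≤ F h - F 0 := by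
  have a1 : ∀ t ∈ Set.Icc 0 h, 0 ≤ F' t + M * t - F' 0 := by
    intro t ht
    have := aux_mono h (fun t => F' t + M * t) (fun t => F'' t + M * 1)
      (fun t ht => (h2 t ht).add ((hasDerivWithinAt_id t _).const_mul M))
      (fun t ht => by have := hp t ht; linarith) t ht
    linarith
  have := aux_mono h (fun t => F t + M / 2 * t ^ 2 - F' 0 * t)
    (fun t => F' t + M / 2 * (2 * t) - F' 0 * 1)
      (fun t ht => by
        have hsq : HasDerivWithinAt (fun t : ℝ => t ^ 2) (2 * t) (Set.Icc 0 h) t := by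
          simpa using (hasDerivAt_pow 2 t).hasDerivWithinAt
        exact ((h1 t ht).add (hsq.const_mul (M / 2))).sub
          ((hasDerivWithinAt_id t _).const_mul (F' 0)))
      (fun t ht => by have := a1 t ht; linarith) h ⟨hh, le_rfl⟩
  linarith

/-- Landau-type inequality. If `f` is `C²` on `[0, L]` with
`M₀ = max |f| > 0`, `M₁ = max |f′| > 0`, `M₂ = max |f″| > 0`, then
`M₁² ≤ 4 M₀ M₂` or `M₁ < 8 M₀ / L`. -/
theorem stmt6 (L : ℝ) (hL : 0 < L) (f : ℝ → ℝ)
    (hf : ContDiffOn ℝ 2 f (Set.Icc 0 L)) (M₀ M₁ M₂ : ℝ)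
    (h0 : IsGreatest ((fun x => |f x|) '' Set.Icc 0 L) M₀)
    (h1 : IsGreatest ((fun x => |derivWithin f (Set.Icc 0 L) x|) '' Set.Icc 0 L) M₁)
    (h2 : IsGreatest
      ((fun x => |derivWithin (derivWithin f (Set.Icc 0 L)) (Set.Icc 0 L) x|) '' Set.Icc 0 L) M₂)
    (hM0 : 0 < M₀) (hM1 : 0 < M₁) (hM2 : 0 < M₂) :
    M₁ ^ 2 ≤ 4 * M₀ * M₂ ∨ M₁ < 8 * M₀ / L := by
  by_contra hcon
  push Not at hcon
  obtain ⟨c1, c2⟩ := hcon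
  obtain ⟨⟨x, hx, hxM⟩, -⟩ := h1
  simp only at hxM
  have hu : UniqueDiffOn ℝ (Set.Icc 0 L) := uniqueDiffOn_Icc hL
  set S := Set.Icc 0 L with hS
  set f' := derivWithin f S with hf'
  have d1 : ∀ y ∈ S, HasDerivWithinAt f (f' y) S y := fun y hy =>
    ((hf.differentiableOn (by norm_num)) y hy).hasDerivWithinAt
  have d2 : ∀ y ∈ S, HasDerivWithinAt f' (derivWithin f' S y) S y := fun y hy =>
    (((hf.derivWithin hu (m := 1) (by norm_num)).differentiableOn (by norm_num)) y
      hy).hasDerivWithinAt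
  have b0 : ∀ y ∈ S, |f y| ≤ M₀ := fun y hy => h0.2 ⟨y, hy, rfl⟩
  have b2 : ∀ y ∈ S, |derivWithin f' S y| ≤ M₂ := fun y hy => h2.2 ⟨y, hy, rfl⟩
  set h := 4 * M₀ / M₁ with hh
  have hpos : 0 < h := by positivity
  have hML : h * M₁ = 4 * M₀ := by rw [hh]; field_simp
  have hhL : h ≤ L / 2 := by
    rw [div_le_iff₀ hL] at c2
    rw [hh, div_le_iff₀ hM1]; linarith
  obtain ⟨e, he, hmem⟩ : ∃ e : ℝ, (e = 1 ∨ e = -1) ∧ ∀ t ∈ Set.Icc 0 h, x + e * t ∈ S := by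
    rcases le_total x (L / 2) with hl | hl
    · exact ⟨1, Or.inl rfl, fun t ht => ⟨by linarith [hx.1, ht.1], by linarith [ht.2]⟩⟩
    · exact ⟨-1, Or.inr rfl, fun t ht => ⟨by linarith [ht.2], by linarith [hx.2, ht.1]⟩⟩
  obtain ⟨s, hs, hsM⟩ : ∃ s : ℝ, (s = 1 ∨ s = -1) ∧ s * (f' x * e) = M₁ := by
    rcases he with rfl | rfl <;> rcases abs_choice (f' x) with h' | h'
    · exact ⟨1, Or.inl rfl, by linarith⟩
    · exact ⟨-1, Or.inr rfl, by linarith⟩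
    · exact ⟨-1, Or.inr rfl, by linarith⟩
    · exact ⟨1, Or.inl rfl, by linarith⟩
  have he2 : e * e = 1 := by rcases he with rfl | rfl <;> norm_num
  have hlin : ∀ t, HasDerivWithinAt (fun t : ℝ => x + e * t) e (Set.Icc 0 h) t := fun t => by
    simpa using ((hasDerivWithinAt_id t (Set.Icc 0 h)).const_mul e).const_add x
  have key := aux_taylor h M₂ hpos.le (fun t => s * f (x + e * t))
    (fun t => s * (f' (x + e * t) * e)) (fun t => s * (derivWithin f' S (x + e * t) * e * e))
    (fun t ht => ((d1 _ (hmem t ht)).comp t (hlin t) hmem).const_mul s)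
    (fun t ht => ((HasDerivWithinAt.comp (h₂ := f') (h := fun t => x + e * t) t
      (d2 _ (hmem t ht)) (hlin t) hmem).mul_const e).const_mul s)
    (fun t ht => by
      have := abs_le.1 (b2 _ (hmem t ht))
      simp only [mul_assoc, he2, mul_one]
      rcases hs with rfl | rfl <;> linarith [this.1, this.2])
  simp only [mul_zero, add_zero, hsM] at key
  have u1 := abs_le.1 (b0 _ hx)
  have u2 := abs_le.1 (b0 _ (hmem h ⟨hpos.le, le_rfl⟩))
  have key2 : M₁ * h - M₂ * h ^ 2 / 2 ≤ 2 * M₀ := by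
    rcases hs with rfl | rfl <;> linarith [u1.1, u1.2, u2.1, u2.2]
  have k3 : 4 * M₀ ≤ M₂ * h ^ 2 := by linarith
  have k4 : 4 * M₀ * M₁ ^ 2 ≤ M₂ * (4 * M₀) ^ 2 := by
    rw [← hML]
    rw [← hML] at k3
    nlinarith [mul_le_mul_of_nonneg_right k3 (sq_nonneg M₁)]
  nlinarith [mul_lt_mul_of_pos_left c1 hM0]
end

section
/- Let p ≥ 1 be an integer and let m₀, m₁, …, m_p be positive real numbers satisfying m_{q+1}² ≤ 4 m_q m_{q+2} for every integer q with 0 ≤ q ≤ p−2. Then m₁ ≤ 2^{p−1} m_p^{1/p} m₀^{1−1/p}; equivalently, m_p / m₀ ≥ 4^{−p(p−1)/2} (m₁/m₀)^p. -/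
/-- if `m₀, …, m_p` are positive reals with `m_{q+1}² ≤ 4 m_q m_{q+2}`
for all `0 ≤ q ≤ p−2`, then `m₁ ≤ 2^{p−1} m_p^{1/p} m₀^{1−1/p}`; equivalently,
`m_p/m₀ ≥ 4^{−p(p−1)/2} (m₁/m₀)^p`. -/
theorem stmt7 (p : ℕ) (hp : 1 ≤ p) (m : ℕ → ℝ) (hpos : ∀ q, q ≤ p → 0 < m q)
    (hlog : ∀ q : ℕ, q + 2 ≤ p → (m (q + 1)) ^ 2 ≤ 4 * m q * m (q + 2)) :
    m 1 ≤ 2 ^ (p - 1) * (m p) ^ ((1 : ℝ) / p) * (m 0) ^ (1 - (1 : ℝ) / p) ∧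
      m p / m 0 ≥ (4 : ℝ) ^ (-((p : ℝ) * ((p : ℝ) - 1) / 2)) * (m 1 / m 0) ^ p := by
  obtain ⟨n, rfl⟩ : ∃ n, p = n + 1 := ⟨p - 1, by omega⟩
  have hL : ∀ q, q + 2 ≤ n + 1 → 2 * Real.log (m (q + 1)) ≤
      2 * Real.log 2 + Real.log (m q) + Real.log (m (q + 2)) := by
    intro q hq
    have h0 := hpos q (by omega)
    have h1 := hpos (q + 1) (by omega)
    have h2 := hpos (q + 2) hq
    have h := Real.log_le_log (by positivity) (hlog q hq)
    rw [Real.log_mul (by positivity) h2.ne', Real.log_mul (by norm_num) h0.ne', Real.log_pow,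
      show (4 : ℝ) = 2 ^ 2 by norm_num, Real.log_pow] at h
    push_cast at h
    linarith
  have hD : ∀ q : ℕ, q + 1 ≤ n + 1 → Real.log (m 1) - Real.log (m 0) - q * (2 * Real.log 2) ≤
      Real.log (m (q + 1)) - Real.log (m q) := by
    intro q
    induction q with
    | zero => intro _; simp
    | succ q ih =>
      intro hq
      have h1 := ih (by omega)
      have h2 := hL q (by omega)
      push_cast
      rw [show q + 1 + 1 = q + 2 from rfl]
      linarith
  have hS : ∀ q : ℕ, q ≤ n + 1 → (q : ℝ) * (Real.log (m 1) - Real.log (m 0))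
      - q * (q - 1) * Real.log 2 ≤ Real.log (m q) - Real.log (m 0) := by
    intro q
    induction q with
    | zero => intro _; simp
    | succ q ih =>
      intro hq
      have h1 := ih (by omega)
      have h2 := hD q hq
      push_cast
      linarith
  have key := hS (n + 1) le_rfl
  have h0 := hpos 0 (by omega)
  have h1 := hpos 1 (by omega)
  have hn := hpos (n + 1) le_rfl
  have hN : (0 : ℝ) < ((n + 1 : ℕ) : ℝ) := by positivity
  constructor
  · rw [← Real.log_le_log_iff h1 (by positivity), Real.log_mul (by positivity) (by positivity),
      Real.log_mul (by positivity) (by positivity), Real.log_pow, Real.log_rpow hn,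
      Real.log_rpow h0, Nat.add_sub_cancel]
    refine le_of_mul_le_mul_left ?_ hN
    have e : ((n + 1 : ℕ) : ℝ) * (n * Real.log 2 + 1 / ((n + 1 : ℕ) : ℝ) * Real.log (m (n + 1))
        + (1 - 1 / ((n + 1 : ℕ) : ℝ)) * Real.log (m 0)) =
        ((n + 1 : ℕ) : ℝ) * n * Real.log 2 + Real.log (m (n + 1))
        + (((n + 1 : ℕ) : ℝ) - 1) * Real.log (m 0) := by
      field_simp
    rw [e]
    push_cast at key ⊢
    linarith
  · rw [ge_iff_le, ← Real.log_le_log_iff (by positivity) (by positivity),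
      Real.log_mul (by positivity) (by positivity), Real.log_rpow (by norm_num), Real.log_pow,
      Real.log_div h1.ne' h0.ne', Real.log_div hn.ne' h0.ne',
      show (4 : ℝ) = 2 ^ 2 by norm_num, Real.log_pow]
    push_cast at key ⊢
    linarith
end

section
/- Let p be a positive integer and 0 ≤ q ≤ p−1 an integer, and define v_{q,p}: ℝ → ℝ by v_{q,p}(t) = 1 for 0 ≤ t ≤ (2p−q)/(2p), v_{q,p}(t) = g(2pt − 2p + q) for (2p−q)/(2p) ≤ t ≤ (2p−q+1)/(2p), v_{q,p}(t) = 0 for t > (2p−q+1)/(2p), and v_{q,p}(−t) = v_{q,p}(t) for t < 0, where g(x) = 1 − 6x⁴ + 8x⁶ − 3x⁸. Then v_{q,p} is twice continuously differentiable on ℝ and satisfies |v_{q,p}(t)| ≤ 1, |v_{q,p}′(t)| < 5p, and |v_{q,p}″(t)| < 44p² for all t ∈ ℝ. -/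
/-- The polynomial `g(x) = 1 − 6x⁴ + 8x⁶ − 3x⁸`. -/
noncomputable def gPoly (x : ℝ) : ℝ := 1 - 6 * x ^ 4 + 8 * x ^ 6 - 3 * x ^ 8

/-- The even cutoff function `v_{q,p}` of the paper: `v_{q,p}(t) = 1` for
`0 ≤ t ≤ (2p−q)/(2p)`, `v_{q,p}(t) = g(2pt − 2p + q)` for
`(2p−q)/(2p) ≤ t ≤ (2p−q+1)/(2p)`, `v_{q,p}(t) = 0` for `t > (2p−q+1)/(2p)`,
extended evenly to `t < 0`. -/
noncomputable def vCut (q p : ℕ) (t : ℝ) : ℝ :=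
  if |t| ≤ (2 * (p : ℝ) - q) / (2 * p) then 1
  else if |t| ≤ (2 * (p : ℝ) - q + 1) / (2 * p) then
    gPoly (2 * p * |t| - 2 * p + q)
  else 0

noncomputable def clampAux (x : ℝ) : ℝ := max 0 (min 1 x)

lemma clampAux_nonneg (x : ℝ) : 0 ≤ clampAux x := le_max_left _ _
lemma clampAux_le (x : ℝ) : clampAux x ≤ 1 := max_le zero_le_one (min_le_left _ _)
lemma clampAux_of_nonpos {x : ℝ} (h : x ≤ 0) : clampAux x = 0 :=
  max_eq_left ((min_le_right _ _).trans h)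
lemma clampAux_of_ge {x : ℝ} (h : 1 ≤ x) : clampAux x = 1 := by
  unfold clampAux; rw [min_eq_left h]; simp
lemma clampAux_of_mem {x : ℝ} (h : 0 ≤ x) (h1 : x ≤ 1) : clampAux x = x := by
  unfold clampAux; rw [min_eq_right h1, max_eq_right h]
lemma clampAux_cont : Continuous clampAux := by unfold clampAux; fun_prop

lemma clamp_hasDerivAt (G G' : ℝ → ℝ) (hG : ∀ x, HasDerivAt G (G' x) x)
    (h0 : G' 0 = 0) (h1 : G' 1 = 0) (x : ℝ) :
    HasDerivAt (fun y => G (clampAux y)) (G' (clampAux x)) x := by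
  have A : HasDerivWithinAt (fun y => G (clampAux y)) (G' (clampAux x)) (Set.Iic 0) x := by
    by_cases hx : x ∈ Set.Iic (0 : ℝ)
    · rw [clampAux_of_nonpos hx, h0]
      exact (hasDerivWithinAt_const x _ (G 0)).congr
        (fun y hy => by simp only [clampAux_of_nonpos hy])
        (by simp only [clampAux_of_nonpos hx])
    · exact HasFDerivWithinAt.of_notMem_closure (by rwa [isClosed_Iic.closure_eq])
  have B : HasDerivWithinAt (fun y => G (clampAux y)) (G' (clampAux x)) (Set.Icc 0 1) x := by
    by_cases hx : x ∈ Set.Icc (0 : ℝ) 1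
    · rw [clampAux_of_mem hx.1 hx.2]
      exact (hG x).hasDerivWithinAt.congr
        (fun y hy => by simp only [clampAux_of_mem hy.1 hy.2])
        (by simp only [clampAux_of_mem hx.1 hx.2])
    · exact HasFDerivWithinAt.of_notMem_closure (by rwa [isClosed_Icc.closure_eq])
  have C : HasDerivWithinAt (fun y => G (clampAux y)) (G' (clampAux x)) (Set.Ici 1) x := by
    by_cases hx : x ∈ Set.Ici (1 : ℝ)
    · rw [clampAux_of_ge hx, h1]
      exact (hasDerivWithinAt_const x _ (G 1)).congr
        (fun y hy => by simp only [clampAux_of_ge hy])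
        (by simp only [clampAux_of_ge hx])
    · exact HasFDerivWithinAt.of_notMem_closure (by rwa [isClosed_Ici.closure_eq])
  have D := (A.union B).union C
  refine D.hasDerivAt (Filter.mem_of_superset Filter.univ_mem ?_)
  intro y _
  rcases le_total y 0 with h | h
  · exact Or.inl (Or.inl h)
  · rcases le_total y 1 with h' | h'
    · exact Or.inl (Or.inr ⟨h, h'⟩)
    · exact Or.inr h'

noncomputable def gOne (x : ℝ) : ℝ := -24 * x ^ 3 + 48 * x ^ 5 - 24 * x ^ 7
noncomputable def gTwo (x : ℝ) : ℝ := -72 * x ^ 2 + 240 * x ^ 4 - 168 * x ^ 6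

lemma gPoly_deriv (x : ℝ) : HasDerivAt gPoly (gOne x) x := by
  have := ((((hasDerivAt_pow 4 x).const_mul 6).const_sub 1).add
    ((hasDerivAt_pow 6 x).const_mul 8)).sub ((hasDerivAt_pow 8 x).const_mul 3)
  refine HasDerivAt.congr_deriv (f := gPoly) this ?_
  unfold gOne; norm_num; ring

lemma gOne_deriv (x : ℝ) : HasDerivAt gOne (gTwo x) x := by
  have := (((hasDerivAt_pow 3 x).const_mul (-24)).add
    ((hasDerivAt_pow 5 x).const_mul 48)).sub ((hasDerivAt_pow 7 x).const_mul 24)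
  refine HasDerivAt.congr_deriv (f := gOne) this ?_
  unfold gTwo; norm_num; ring

lemma gPoly_bound {x : ℝ} (h0 : 0 ≤ x) (h1 : x ≤ 1) : |gPoly x| ≤ 1 := by
  have hy0 : 0 ≤ x ^ 2 := by positivity
  have hy1 : x ^ 2 ≤ 1 := by nlinarith
  have e : gPoly x = (1 - x ^ 2) ^ 3 * (1 + 3 * x ^ 2) := by unfold gPoly; ring
  have e2 : gPoly x = 1 - (x ^ 2) ^ 2 * (3 * (1 - x ^ 2) ^ 2 + 2 * (1 - x ^ 2) + 1) := by
    unfold gPoly; ring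
  have hz : 0 ≤ 1 - x ^ 2 := by linarith
  rw [abs_le]
  constructor
  · have : 0 ≤ gPoly x := by rw [e]; positivity
    linarith
  · rw [e2]
    have : 0 ≤ (x ^ 2) ^ 2 * (3 * (1 - x ^ 2) ^ 2 + 2 * (1 - x ^ 2) + 1) := by positivity
    linarith

lemma gOne_bound {x : ℝ} (h0 : 0 ≤ x) (h1 : x ≤ 1) : |gOne x| < 5 / 2 := by
  have hy1 : x ^ 2 ≤ 1 := by nlinarith
  have e : gOne x = -(24 * (x * (x * (1 - x ^ 2)) ^ 2)) := by unfold gOne; ring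
  rw [e, abs_neg, abs_of_nonneg (by positivity)]
  have hz : 0 ≤ 1 - x ^ 2 := by linarith
  have hw0 : 0 ≤ x * (1 - x ^ 2) := mul_nonneg h0 hz
  have hx2 : x * 1.31 ≤ x ^ 2 + 0.43 := by nlinarith [sq_nonneg (x - 0.655)]
  have h3 : x * (x * (1 - x ^ 2)) ^ 2 * 1.31 ≤ (x ^ 2 + 0.43) * (x * (1 - x ^ 2)) ^ 2 := by
    nlinarith [mul_le_mul_of_nonneg_right hx2 (sq_nonneg (x * (1 - x ^ 2)))]
  have h4 : (x ^ 2 + 0.43) * (x * (1 - x ^ 2)) ^ 2 < 0.136 := by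
    have e2 : (x ^ 2 + 0.43) * (x * (1 - x ^ 2)) ^ 2
      = (x ^ 2 + 0.43) * x ^ 2 * (1 - x ^ 2) ^ 2 := by ring
    rw [e2]
    have hy0 : 0 ≤ x ^ 2 := by positivity
    generalize x ^ 2 = y at *
    nlinarith [sq_nonneg ((1 - y) * (y - 0.43)), sq_nonneg (y - 0.43), mul_nonneg hy0 (sq_nonneg (y - 0.43)), mul_nonneg hz (sq_nonneg (y - 0.43)), mul_nonneg (mul_nonneg hy0 hz) (sq_nonneg (y - 0.43)), sq_nonneg (y * (y - 0.43))]
  linarith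

lemma gTwo_bound {x : ℝ} (h0 : 0 ≤ x) (h1 : x ≤ 1) : |gTwo x| < 11 := by
  have hy0 : 0 ≤ x ^ 2 := by positivity
  have hy1 : x ^ 2 ≤ 1 := by nlinarith
  have e : gTwo x = -72 * x ^ 2 + 240 * (x ^ 2) ^ 2 - 168 * (x ^ 2) ^ 3 := by unfold gTwo; ring
  rw [e]
  generalize x ^ 2 = y at *
  rw [abs_lt]
  constructor
  · nlinarith [mul_nonneg (sub_nonneg.2 hy1) (sq_nonneg (y - 0.1865)), mul_nonneg hy0 (sq_nonneg (y - 0.1865)), sq_nonneg (y - 0.1865)]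
  · nlinarith [mul_nonneg (sub_nonneg.2 hy1) (sq_nonneg (y - 0.766)), mul_nonneg hy0 (sq_nonneg (y - 0.766)), sq_nonneg (y - 0.766)]

lemma vCut_eq (p q : ℕ) (hp : 1 ≤ p) (hq : q ≤ p - 1) (t : ℝ) :
    vCut q p t = gPoly (clampAux (2 * p * t + (q - 2 * p)))
      + gPoly (clampAux (-(2 * p) * t + (q - 2 * p))) - 1 := by
  have hp' : (1 : ℝ) ≤ p := by exact_mod_cast hp
  have hq' : (q : ℝ) ≤ p := by exact_mod_cast (by omega : q ≤ p)
  have g0 : gPoly 0 = 1 := by norm_num [gPoly]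
  have g1 : gPoly 1 = 0 := by norm_num [gPoly]
  have key : vCut q p t = gPoly (clampAux (2 * p * |t| + (q - 2 * p))) := by
    unfold vCut
    have h2 : (0 : ℝ) < 2 * p := by linarith
    simp only [le_div_iff₀ h2]
    split_ifs with h h'
    · rw [clampAux_of_nonpos (by linarith), g0]
    · rw [clampAux_of_mem (by linarith) (by linarith)]; congr 1; ring
    · rw [clampAux_of_ge (by linarith), g1]
  rw [key]
  rcases le_total 0 t with h | h
  · rw [abs_of_nonneg h, clampAux_of_nonpos (x := -(2 * p) * t + (q - 2 * p)) (by nlinarith), g0]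
    ring
  · rw [abs_of_nonpos h, clampAux_of_nonpos (x := (2 * p) * t + (q - 2 * p)) (by nlinarith), g0]
    rw [mul_neg, neg_mul]; ring

/-- `v_{q,p}` is `C²` on `ℝ` and satisfies `|v_{q,p}| ≤ 1`,
`|v_{q,p}′| < 5p` and `|v_{q,p}″| < 44p²` everywhere. -/
theorem stmt9 (p q : ℕ) (hp : 1 ≤ p) (hq : q ≤ p - 1) :
    ContDiff ℝ 2 (vCut q p) ∧
      ∀ t : ℝ, |vCut q p t| ≤ 1 ∧ |deriv (vCut q p) t| < 5 * p ∧
        |deriv (deriv (vCut q p)) t| < 44 * (p : ℝ) ^ 2 := by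
  have hp' : (1 : ℝ) ≤ p := by exact_mod_cast hp
  have hq' : (q : ℝ) ≤ p := by exact_mod_cast (by omega : q ≤ p)
  have z1 : gOne 0 = 0 := by norm_num [gOne]
  have z1' : gOne 1 = 0 := by norm_num [gOne]
  have z2 : gTwo 0 = 0 := by norm_num [gTwo]
  have z2' : gTwo 1 = 0 := by norm_num [gTwo]
  have g0 : gPoly 0 = 1 := by norm_num [gPoly]
  have lin : ∀ a b t : ℝ, HasDerivAt (fun t => a * t + b) a t := fun a b t => by
    simpa using ((hasDerivAt_id t).const_mul a).add_const b
  set c : ℝ := q - 2 * p with hc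
  set r : ℝ := 2 * p with hr
  have D1 : ∀ t, HasDerivAt (vCut q p)
      (r * gOne (clampAux (r * t + c)) + -r * gOne (clampAux (-r * t + c))) t := by
    intro t
    have a := (clamp_hasDerivAt _ _ gPoly_deriv z1 z1' (r * t + c)).comp t (lin r c t)
    have b := (clamp_hasDerivAt _ _ gPoly_deriv z1 z1' (-r * t + c)).comp t (lin (-r) c t)
    have e : vCut q p = fun t => gPoly (clampAux (r * t + c))
      + gPoly (clampAux (-r * t + c)) - 1 := funext (vCut_eq p q hp hq)
    rw [e]
    exact ((a.add b).sub_const 1).congr_deriv (by ring)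
  have d1 : deriv (vCut q p) = fun t =>
      (r * gOne (clampAux (r * t + c)) + -r * gOne (clampAux (-r * t + c))) :=
    funext fun t => (D1 t).deriv
  have D2 : ∀ t, HasDerivAt (deriv (vCut q p))
      (r ^ 2 * (gTwo (clampAux (r * t + c)) + gTwo (clampAux (-r * t + c)))) t := by
    intro t
    have a := (clamp_hasDerivAt _ _ gOne_deriv z2 z2' (r * t + c)).comp t (lin r c t)
    have b := (clamp_hasDerivAt _ _ gOne_deriv z2 z2' (-r * t + c)).comp t (lin (-r) c t)
    rw [d1]
    exact ((a.const_mul r).add (b.const_mul (-r))).congr_deriv (by ring)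
  have d2 : deriv (deriv (vCut q p)) = fun t =>
      (r ^ 2 * (gTwo (clampAux (r * t + c)) + gTwo (clampAux (-r * t + c)))) :=
    funext fun t => (D2 t).deriv
  refine ⟨?_, fun t => ?_⟩
  · rw [show (2 : WithTop ℕ∞) = 1 + 1 by norm_num, contDiff_succ_iff_deriv]
    refine ⟨fun t => (D1 t).differentiableAt, by simp, ?_⟩
    rw [contDiff_one_iff_deriv]
    refine ⟨fun t => (D2 t).differentiableAt, ?_⟩
    rw [d2]
    have := clampAux_cont
    unfold gTwo
    fun_prop
  · rw [d2, d1, vCut_eq p q hp hq]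
    simp only [← hr, ← hc]
    have hr0 : 0 < r := by linarith
    have main : ∀ x : ℝ, |gPoly (clampAux x)| ≤ 1 ∧ |r * gOne (clampAux x)| < 5 * p ∧
        |r ^ 2 * gTwo (clampAux x)| < 44 * (p : ℝ) ^ 2 := by
      intro x
      have h0 := clampAux_nonneg x
      have h1 := clampAux_le x
      refine ⟨gPoly_bound h0 h1, ?_, ?_⟩
      · rw [abs_mul, abs_of_pos hr0]
        have := mul_lt_mul_of_pos_left (gOne_bound h0 h1) hr0
        linarith
      · rw [abs_mul, abs_of_pos (pow_pos hr0 2)]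
        have := mul_lt_mul_of_pos_left (gTwo_bound h0 h1) (pow_pos hr0 2)
        have e : r ^ 2 = 4 * (p : ℝ) ^ 2 := by rw [hr]; ring
        rw [e] at this ⊢
        linarith
    rcases le_total 0 t with h | h
    · rw [clampAux_of_nonpos (x := -r * t + c) (by nlinarith), g0, z1, z2]
      simpa using main (r * t + c)
    · rw [clampAux_of_nonpos (x := r * t + c) (by nlinarith), g0, z1, z2]
      simpa using main (-r * t + c)
end

section
/- Let n ≥ 2 and p ≥ 1 be integers and define the sequence D_q by D₀ = 1, D₁ = 3(1 + 44²n²p⁴ + 4·5²np²), and D_q = 3(1 + 44²n²p⁴) D_{q−2} + 12·5²np² · D_{q−1} for q ≥ 2. Then D_p < 2^{(2n+18)p²}. -/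
/-- for the sequence `D_q` defined by `D₀ = 1`,
`D₁ = 3(1 + 44²n²p⁴ + 4·5²np²)` and
`D_q = 3(1 + 44²n²p⁴) D_{q−2} + 12·5²np² D_{q−1}` for `q ≥ 2`,
one has `D_p < 2^{(2n+18)p²}`. -/
theorem stmt11 (n p : ℕ) (hn : 2 ≤ n) (hp : 1 ≤ p) (D : ℕ → ℝ)
    (hD0 : D 0 = 1)
    (hD1 : D 1 = 3 * (1 + 44 ^ 2 * (n : ℝ) ^ 2 * (p : ℝ) ^ 4 + 4 * 5 ^ 2 * n * (p : ℝ) ^ 2))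
    (hrec : ∀ q : ℕ, 2 ≤ q →
      D q = 3 * (1 + 44 ^ 2 * (n : ℝ) ^ 2 * (p : ℝ) ^ 4) * D (q - 2) +
        12 * 5 ^ 2 * (n : ℝ) * (p : ℝ) ^ 2 * D (q - 1)) :
    D p < 2 ^ ((2 * n + 18) * p ^ 2) := by
  obtain ⟨x, hx⟩ : ∃ x : ℝ, x = (n : ℝ) * (p : ℝ) ^ 2 := ⟨_, rfl⟩
  have hn' : (2 : ℝ) ≤ n := by exact_mod_cast hn
  have hp' : (1 : ℝ) ≤ p := by exact_mod_cast hp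
  have hx2 : 2 ≤ x := by
    rw [hx]
    nlinarith [one_le_pow₀ hp' (n := 2)]
  obtain ⟨M, hM⟩ : ∃ M : ℝ, M = 3 * (1 + 44 ^ 2 * x ^ 2) + 300 * x := ⟨_, rfl⟩
  have hM1 : 1 ≤ M := by rw [hM]; nlinarith
  have key : ∀ q : ℕ, D q ≤ M ^ q ∧ D (q + 1) ≤ M ^ (q + 1) := by
    intro q
    induction q with
    | zero =>
      refine ⟨by simp [hD0], ?_⟩
      simp only [zero_add, pow_one]
      rw [hD1, hM, hx]
      apply le_of_eq
      ring
    | succ k ih =>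
      obtain ⟨h1, h2⟩ := ih
      refine ⟨h2, ?_⟩
      have hr := hrec (k + 2) (by omega)
      have e1 : k + 2 - 2 = k := by omega
      have e2 : k + 2 - 1 = k + 1 := by omega
      rw [e1, e2] at hr
      have hr' : D (k + 1 + 1) = 3 * (1 + 44 ^ 2 * x ^ 2) * D k + 300 * x * D (k + 1) := by
        rw [show k + 1 + 1 = k + 2 from rfl, hr, hx]
        ring
      rw [hr']
      have h3 : D k ≤ M ^ (k + 1) := h1.trans (pow_le_pow_right₀ hM1 (by omega))
      calc 3 * (1 + 44 ^ 2 * x ^ 2) * D k + 300 * x * D (k + 1)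
          ≤ 3 * (1 + 44 ^ 2 * x ^ 2) * M ^ (k + 1) + 300 * x * M ^ (k + 1) := by gcongr
        _ = (3 * (1 + 44 ^ 2 * x ^ 2) + 300 * x) * M ^ (k + 1) := by ring
        _ = M ^ (k + 1 + 1) := by rw [← hM]; ring
  have hnn : (n : ℝ) < 2 ^ n := by exact_mod_cast Nat.lt_two_pow_self
  have hpp : (p : ℝ) < 2 ^ p := by exact_mod_cast Nat.lt_two_pow_self
  have hMlt : M < 2 ^ ((2 * n + 18) * p) := by
    calc M < 2 ^ 13 * x ^ 2 := by rw [hM]; nlinarith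
      _ = 2 ^ 13 * ((n : ℝ) * (p : ℝ) ^ 2) ^ 2 := by rw [hx]
      _ ≤ 2 ^ 13 * ((2 : ℝ) ^ n * ((2 : ℝ) ^ p) ^ 2) ^ 2 := by gcongr
      _ = 2 ^ (13 + 2 * n + 4 * p) := by ring
      _ ≤ 2 ^ ((2 * n + 18) * p) := by
        apply pow_le_pow_right₀ (by norm_num)
        nlinarith [Nat.mul_le_mul_left n hp]
  calc D p ≤ M ^ p := (key p).1
    _ < (2 ^ ((2 * n + 18) * p)) ^ p := by
      apply pow_lt_pow_left₀ hMlt (by linarith) (by omega)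
    _ = 2 ^ ((2 * n + 18) * p ^ 2) := by
      rw [← pow_mul]
      congr 1
      ring
end

section
/- Let f: [a, b] → ℝ be continuously differentiable with max_{[a,b]} |f| = M > 0 and max_{[a,b]} |f′| = M′ > 0. Then there exists a closed subinterval [t₁, t₂] ⊆ [a, b] of length t₂ − t₁ ≥ min{ b − a, M/(2M′) } on which |f| ≥ M/2. -/
/-- if `f` is `C¹` on `[a,b]` with `max |f| = M > 0` and `max |f′| = M′ > 0`,
then there is a closed subinterval `[t₁, t₂] ⊆ [a,b]` of length at least
`min (b−a) (M/(2M′))` on which `|f| ≥ M/2`. -/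
theorem stmt14 (a b : ℝ) (hab : a < b) (f : ℝ → ℝ)
    (hf : ContDiffOn ℝ 1 f (Set.Icc a b)) (M M' : ℝ)
    (hM : IsGreatest ((fun x => |f x|) '' Set.Icc a b) M)
    (hM' : IsGreatest ((fun x => |derivWithin f (Set.Icc a b) x|) '' Set.Icc a b) M')
    (hMpos : 0 < M) (hM'pos : 0 < M') :
    ∃ t₁ t₂ : ℝ, a ≤ t₁ ∧ t₁ ≤ t₂ ∧ t₂ ≤ b ∧
      min (b - a) (M / (2 * M')) ≤ t₂ - t₁ ∧
      ∀ x ∈ Set.Icc t₁ t₂, M / 2 ≤ |f x| := by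
  obtain ⟨⟨c, hc, hcM⟩, -⟩ := hM
  have hlip : ∀ x ∈ Set.Icc a b, |f x - f c| ≤ M' * |x - c| := by
    intro x hx
    have h := (convex_Icc a b).norm_image_sub_le_of_norm_derivWithin_le
      (f := f) (C := M') (hf.differentiableOn (by norm_num))
      (fun y hy => hM'.2 ⟨y, hy, rfl⟩) hc hx
    simpa only [Real.norm_eq_abs] using h
  simp only at hcM
  obtain ⟨d, hd⟩ : ∃ d, d = M / (2 * M') := ⟨_, rfl⟩
  have hdpos : 0 < d := by rw [hd]; positivity
  have hMd : M' * d = M / 2 := by rw [hd]; field_simp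
  rw [← hd]
  obtain ⟨hc1, hc2⟩ := hc
  refine ⟨max a (c - d), min b (c + d), le_max_left _ _, ?_, min_le_left _ _, ?_, ?_⟩
  · exact (max_le hc1 (by linarith)).trans (le_min hc2 (by linarith))
  · rcases max_cases a (c - d) with h | h <;> rcases min_cases b (c + d) with h' | h' <;>
      rcases min_cases (b - a) d with h'' | h'' <;> linarith
  · rintro x ⟨hx1, hx2⟩
    obtain ⟨h1, h2⟩ := max_le_iff.1 hx1
    obtain ⟨h3, h4⟩ := le_min_iff.1 hx2
    have h5 := hlip x ⟨h1, h3⟩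
    have h6 : |x - c| ≤ d := abs_le.2 ⟨by linarith, by linarith⟩
    have h7 : M' * |x - c| ≤ M' * d := mul_le_mul_of_nonneg_left h6 hM'pos.le
    have h8 := abs_sub_abs_le_abs_sub (f c) (f x)
    rw [abs_sub_comm (f c) (f x)] at h8
    linarith
end
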